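/- The prime number theorem implies that (1/N)∑_{n=1}^{N} λ(n) → 0 as N → ∞, where λ(n) = (−1)^{Ω(n)} is the Liouville function and Ω(n) counts prime factors of n with multiplicity. -/

import Mathlib

open Finset Filter

/-! Up to `e^u`, the average of a bounded sequence is a bounded, slowly oscillating function of `u`,
and its Laplace transform at `s` is the Dirichlet series of the sequence at `s + 1`, divided by
`s + 1`. For the Liouville function the Dirichlet series is `ζ(2s) / ζ(s)`, which extends
continuously to the line `re s = 1` because `ζ` has no zeros there. By Ingham's Tauberian theorem,
a bounded slowly oscillating function whose Laplace transform extends continuously to the imaginary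
axis tends to zero: averaging it against the Fourier transform of a compactly supported function
gives an integral over the imaginary axis, which tends to zero by the Riemann–Lebesgue lemma, and
when the averaging kernel is concentrated, slow oscillation recovers the function from its
averages. -/

section Fourier

open MeasureTheory Complex Topology FourierTransform

variable {E : Type*} [NormedAddCommGroup E]

lemma integral_smul_comp_mul_sub [NormedSpace ℝ E] {R : ℝ} (hR : 0 < R) (x : ℝ) (f : ℝ → E) :
    ∫ u, R • f (R * (u - x)) = ∫ w, f w := by
  rw [integral_sub_right_eq_self (fun u ↦ R • f (R * u)) x, integral_smul,
    Measure.integral_comp_mul_left, abs_of_pos (inv_pos.2 hR), smul_inv_smul₀ hR.ne']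

variable [NormedSpace ℂ E]

lemma fourier_comp_div {R : ℝ} (hR : 0 < R) (f : ℝ → E) (w : ℝ) :
    𝓕 (fun v ↦ f (v / R)) w = R • 𝓕 f (R * w) := by
  simp only [Real.fourier_real_eq]
  rw [← abs_of_pos hR, ← Measure.integral_comp_div _ R, abs_of_pos hR]
  refine integral_congr_ae (.of_forall fun v ↦ ?_)
  have : v / R * (R * w) = v * w := by field_simp
  simp only [this]

lemma fourier_fourierChar_smul (f : ℝ → E) (x w : ℝ) :
    𝓕 (fun v ↦ 𝐞 (v * x) • f v) w = 𝓕 f (w - x) := by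
  simp only [Real.fourier_real_eq, smul_smul, ← AddChar.map_add_eq_mul]
  refine integral_congr_ae (.of_forall fun v ↦ ?_)
  have : -(v * w) + v * x = -(v * (w - x)) := by ring
  simp only [this]

lemma integral_fourier_smul_eq_integral_smul_fourier {f : ℝ → ℂ} {g : ℝ → E}
    (hf : Integrable f) (hg : Integrable g) : ∫ w, 𝓕 f w • g w = ∫ v, f v • 𝓕 g v := by
  by_cases hE : CompleteSpace E
  swap; · simp [integral, hE]
  simpa using! VectorFourier.integral_fourierIntegral_smul_eq_flip (L := innerₗ ℝ)
    Real.continuous_fourierChar continuous_inner hf hg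

lemma integral_fourier_eq_apply_zero [CompleteSpace E] {f : ℝ → E} (hc : Continuous f)
    (hf : Integrable f) (hf' : Integrable (𝓕 f)) : ∫ w, 𝓕 f w = f 0 := by
  have h := congrFun (hc.fourierInv_fourier_eq hf hf') 0
  simpa [Real.fourierInv_eq] using h

lemma exists_hasCompactSupport_integrable_fourier :
    ∃ ψ : ℝ → ℂ, Continuous ψ ∧ HasCompactSupport ψ ∧ Integrable (𝓕 ψ) ∧ ψ 0 = 1 := by
  let f : ContDiffBump (0 : ℝ) := ⟨1, 2, by norm_num, by norm_num⟩
  have hc : HasCompactSupport (fun x ↦ (f x : ℂ)) := f.hasCompactSupport.comp_left ofReal_zero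
  have hd : ContDiff ℝ (⊤ : ℕ∞) (fun x ↦ (f x : ℂ)) := ofRealCLM.contDiff.comp f.contDiff
  refine ⟨fun x ↦ f x, hd.continuous, hc, ?_, ?_⟩
  · exact (𝓕 (hc.toSchwartzMap hd)).integrable
  · simp [f.one_of_mem_closedBall, f]

end Fourier

section SlowlyOscillating

open MeasureTheory Topology

variable {E : Type*} [NormedAddCommGroup E] {a b : ℝ → E} {C : ℝ}

/-- A function is slowly oscillating (at `+∞`) if `a (x + h) - a x → 0` as `x → ∞` and `h → 0`
jointly: the Tauberian condition of Ingham's theorem. -/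
def SlowlyOscillating (a : ℝ → E) : Prop :=
  Tendsto (fun p : ℝ × ℝ ↦ a (p.1 + p.2) - a p.1) (atTop ×ˢ 𝓝 0) (𝓝 0)

lemma SlowlyOscillating.congr' (ha : SlowlyOscillating a) (hab : a =ᶠ[atTop] b) :
    SlowlyOscillating b := by
  have hadd : Tendsto (fun p : ℝ × ℝ ↦ p.1 + p.2) (atTop ×ˢ 𝓝 0) atTop :=
    tendsto_fst.atTop_add tendsto_snd
  refine Tendsto.congr' ?_ ha
  filter_upwards [hadd.eventually hab, tendsto_fst.eventually hab] with p h₁ h₂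
  rw [h₁, h₂]

lemma SlowlyOscillating.tendsto_comp_add_div (ha : SlowlyOscillating a) (w : ℝ) :
    Tendsto (fun p : ℝ × ℝ ↦ a (p.2 + w / p.1) - a p.2) (atTop ×ˢ atTop) (𝓝 0) :=
  Tendsto.comp ha (tendsto_snd.prodMk (tendsto_fst.const_div_atTop w))

variable [NormedSpace ℂ E]

lemma integrable_smul_comp_add_div {K : ℝ → ℂ} (hK : Integrable K)
    (hmeas : AEStronglyMeasurable a) (hbdd : ∀ u, ‖a u‖ ≤ C) {R : ℝ} (hR : R ≠ 0) (x : ℝ) :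
    Integrable (fun w ↦ K w • a (x + w / R)) := by
  have hKa : Integrable (fun u ↦ K (R * (u - x)) • a u) :=
    ((hK.comp_mul_left' hR).comp_sub_right x).smul_bdd C hmeas (.of_forall hbdd)
  have hsub (w : ℝ) : R * (x + w / R - x) = w := by field_simp; ring
  simpa only [hsub] using (hKa.comp_add_left x).comp_div hR

lemma SlowlyOscillating.tendsto_integral_smul_comp_add_div_sub [CompleteSpace E]
    (ha : SlowlyOscillating a) (hmeas : AEStronglyMeasurable a) (hbdd : ∀ u, ‖a u‖ ≤ C)
    {K : ℝ → ℂ} (hK : Integrable K) :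
    Tendsto (fun p : ℝ × ℝ ↦ (∫ w, K w • a (p.2 + w / p.1)) - (∫ w, K w) • a p.2)
      (atTop ×ˢ atTop) (𝓝 0) := by
  have hpos : ∀ᶠ p : ℝ × ℝ in atTop ×ˢ atTop, p.1 ≠ 0 :=
    tendsto_fst.eventually (eventually_ne_atTop 0)
  have hint {p : ℝ × ℝ} (hp : p.1 ≠ 0) : Integrable (fun w ↦ K w • a (p.2 + w / p.1)) :=
    integrable_smul_comp_add_div hK hmeas hbdd hp p.2
  have hlim : Tendsto (fun p : ℝ × ℝ ↦ ∫ w, K w • (a (p.2 + w / p.1) - a p.2))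
      (atTop ×ˢ atTop) (𝓝 (∫ _ : ℝ, (0 : E))) := by
    refine tendsto_integral_filter_of_dominated_convergence (fun w ↦ ‖K w‖ * (C + C)) ?_ ?_
      (hK.norm.mul_const _) (.of_forall fun w ↦ ?_)
    · filter_upwards [hpos] with p hp
      simp_rw [smul_sub]
      exact ((hint hp).sub (hK.smul_const _)).aestronglyMeasurable
    · refine .of_forall fun p ↦ .of_forall fun w ↦ ?_
      rw [norm_smul]
      gcongr
      exact norm_sub_le_of_le (hbdd _) (hbdd _)
    · simpa using (ha.tendsto_comp_add_div w).const_smul (K w)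
  rw [integral_zero] at hlim
  refine hlim.congr' ?_
  filter_upwards [hpos] with p hp
  simp_rw [smul_sub]
  rw [integral_sub (hint hp) (hK.smul_const _), integral_smul_const]

end SlowlyOscillating

section Laplace

open MeasureTheory Complex Topology FourierTransform

variable {E : Type*} [NormedAddCommGroup E] [NormedSpace ℂ E] {a : ℝ → E} {C : ℝ}

/-- The one-sided Laplace transform `s ↦ ∫₀^∞ e^{-su} a(u) du`, whose boundary behaviour governs
the limit of `a` at `+∞`. As a Bochner integral it has the value `0` where the integral does not
converge absolutely. -/
noncomputable def laplaceTransform (a : ℝ → E) (s : ℂ) : E :=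
  ∫ u in Set.Ioi (0 : ℝ), cexp (-s * u) • a u

lemma norm_cexp_neg_ofReal_mul (σ u : ℝ) : ‖cexp (-(σ : ℂ) * u)‖ = Real.exp (-σ * u) := by
  simp [norm_exp]

lemma integrableOn_cexp_neg_smul (hmeas : AEStronglyMeasurable a (volume.restrict (Set.Ioi 0)))
    (hbdd : ∀ u, 0 < u → ‖a u‖ ≤ C) {σ : ℝ} (hσ : 0 < σ) :
    IntegrableOn (fun u : ℝ ↦ cexp (-(σ : ℂ) * u) • a u) (Set.Ioi 0) := by
  have hexp : IntegrableOn (fun u : ℝ ↦ cexp (-(σ : ℂ) * u)) (Set.Ioi 0) :=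
    (exp_neg_integrableOn_Ioi 0 hσ).mono' (by fun_prop)
      (.of_forall fun u ↦ (norm_cexp_neg_ofReal_mul σ u).le)
  exact hexp.smul_bdd C hmeas (ae_restrict_of_forall_mem measurableSet_Ioi hbdd)

lemma laplaceTransform_add_two_pi_mul_I (a : ℝ → E) (s : ℂ) (v : ℝ) :
    laplaceTransform a (s + 2 * Real.pi * v * I) =
      𝓕 ((Set.Ioi 0).indicator fun u : ℝ ↦ cexp (-s * u) • a u) v := by
  rw [Real.fourier_real_eq, laplaceTransform, ← integral_indicator measurableSet_Ioi]
  refine integral_congr_ae (.of_forall fun u ↦ ?_)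
  by_cases hu : u ∈ Set.Ioi 0
  · simp only [Set.indicator_of_mem hu, Circle.smul_def, Real.fourierChar_apply, smul_smul,
      ← Complex.exp_add]
    push_cast
    ring_nf
  · simp [hu]

lemma integral_smul_laplaceTransform_eq
    (hmeas : AEStronglyMeasurable a (volume.restrict (Set.Ioi 0)))
    (hbdd : ∀ u, 0 < u → ‖a u‖ ≤ C) {ψ : ℝ → ℂ} (hψ : Integrable ψ) {σ : ℝ} (hσ : 0 < σ) :
    ∫ v : ℝ, ψ v • laplaceTransform a (σ + 2 * Real.pi * v * I) =
      laplaceTransform (fun u ↦ 𝓕 ψ u • a u) σ := by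
  have hint := (integrableOn_cexp_neg_smul hmeas hbdd hσ).integrable_indicator measurableSet_Ioi
  simp_rw [laplaceTransform_add_two_pi_mul_I]
  rw [← integral_fourier_smul_eq_integral_smul_fourier hψ hint, laplaceTransform]
  simp_rw [← Set.indicator_smul_apply]
  rw [integral_indicator measurableSet_Ioi]
  simp_rw [smul_comm (𝓕 ψ _)]

lemma tendsto_laplaceTransform_nhdsGT_zero (ha : IntegrableOn a (Set.Ioi 0)) :
    Tendsto (fun σ : ℝ ↦ laplaceTransform a σ) (𝓝[>] 0) (𝓝 (∫ u in Set.Ioi 0, a u)) := by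
  refine tendsto_integral_filter_of_dominated_convergence (fun u ↦ ‖a u‖) ?_ ?_ ha.norm ?_
  · exact .of_forall fun σ ↦ (by fun_prop : Continuous fun u : ℝ ↦ cexp (-(σ : ℂ) * u))
      |>.aestronglyMeasurable.smul ha.aestronglyMeasurable
  · filter_upwards [self_mem_nhdsWithin] with σ (hσ : 0 < σ)
    filter_upwards [ae_restrict_mem measurableSet_Ioi] with u (hu : 0 < u)
    rw [norm_smul, norm_cexp_neg_ofReal_mul]
    refine mul_le_of_le_one_left (norm_nonneg _) (Real.exp_le_one_iff.2 ?_)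
    nlinarith
  · refine .of_forall fun u ↦ ?_
    have : Continuous fun σ : ℝ ↦ cexp (-(σ : ℂ) * u) • a u := by fun_prop
    simpa using (this.tendsto 0).mono_left nhdsWithin_le_nhds

variable {G : ℂ → E} {ψ : ℝ → ℂ}

lemma tendsto_integral_smul_nhdsGT_zero (hGc : ContinuousOn G {s | 0 ≤ s.re})
    (hψ : Continuous ψ) (hψc : HasCompactSupport ψ) :
    Tendsto (fun σ : ℝ ↦ ∫ v : ℝ, ψ v • G (σ + 2 * Real.pi * v * I)) (𝓝[>] 0)
      (𝓝 (∫ v : ℝ, ψ v • G (2 * Real.pi * v * I))) := by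
  have hcont : ContinuousOn (fun σ : ℝ ↦ ∫ v : ℝ, ψ v • G (σ + 2 * Real.pi * v * I))
      (Set.Ici 0) := by
    refine continuousOn_integral_of_compact_support hψc ?_ fun σ v _ hv ↦ by
      rw [image_eq_zero_of_notMem_tsupport hv, zero_smul]
    refine (hψ.comp continuous_snd).continuousOn.smul (hGc.comp (by fun_prop) ?_)
    rintro ⟨σ, v⟩ ⟨hσ, -⟩
    simpa using hσ
  simpa using (hcont 0 Set.self_mem_Ici).tendsto.mono_left
    (nhdsWithin_mono _ Set.Ioi_subset_Ici_self)

lemma integral_smul_boundary_eq (hmeas : AEStronglyMeasurable a (volume.restrict (Set.Ioi 0)))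
    (hbdd : ∀ u, 0 < u → ‖a u‖ ≤ C) (hGc : ContinuousOn G {s | 0 ≤ s.re})
    (hG : Set.EqOn G (laplaceTransform a) {s | 0 < s.re})
    (hψ : Continuous ψ) (hψc : HasCompactSupport ψ) (hψi : Integrable (𝓕 ψ)) :
    ∫ v : ℝ, ψ v • G (2 * Real.pi * v * I) = ∫ u in Set.Ioi 0, 𝓕 ψ u • a u := by
  have hint : IntegrableOn (fun u ↦ 𝓕 ψ u • a u) (Set.Ioi 0) :=
    hψi.integrableOn.smul_bdd C hmeas (ae_restrict_of_forall_mem measurableSet_Ioi hbdd)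
  refine tendsto_nhds_unique (tendsto_integral_smul_nhdsGT_zero hGc hψ hψc)
    ((tendsto_laplaceTransform_nhdsGT_zero hint).congr' ?_)
  filter_upwards [self_mem_nhdsWithin] with σ (hσ : 0 < σ)
  rw [← integral_smul_laplaceTransform_eq hmeas hbdd
    (hψ.integrable_of_hasCompactSupport hψc) hσ]
  refine integral_congr_ae (.of_forall fun v ↦ ?_)
  simp only [hG (show 0 < (σ + 2 * Real.pi * v * I : ℂ).re by simpa using hσ)]

lemma tendsto_integral_fourier_sub_smul
    (hmeas : AEStronglyMeasurable a (volume.restrict (Set.Ioi 0)))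
    (hbdd : ∀ u, 0 < u → ‖a u‖ ≤ C) (hGc : ContinuousOn G {s | 0 ≤ s.re})
    (hG : Set.EqOn G (laplaceTransform a) {s | 0 < s.re})
    (hψ : Continuous ψ) (hψc : HasCompactSupport ψ) (hψi : Integrable (𝓕 ψ)) :
    Tendsto (fun x ↦ ∫ u in Set.Ioi 0, 𝓕 ψ (u - x) • a u) atTop (𝓝 0) := by
  have hRL := (Real.zero_at_infty_fourier fun v : ℝ ↦ ψ v • G (2 * Real.pi * v * I)).comp
    (tendsto_neg_atTop_atBot.mono_right atBot_le_cocompact)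
  refine hRL.congr fun x ↦ ?_
  have hmod (w : ℝ) := fourier_fourierChar_smul ψ x w
  have hshift := integral_smul_boundary_eq hmeas hbdd hGc hG
    (ψ := fun v ↦ 𝐞 (v * x) • ψ v)
    ((Real.continuous_fourierChar.comp (continuous_mul_const x)).smul hψ) (hψc.smul_left)
    (by simpa only [funext hmod] using hψi.comp_sub_right x)
  simp_rw [hmod] at hshift
  rw [← hshift, Function.comp_apply, Real.fourier_real_eq]
  simp only [mul_neg, neg_neg, smul_assoc]

lemma tendsto_integral_fourier_smul_comp_add_div
    (hmeas : AEStronglyMeasurable a (volume.restrict (Set.Ioi 0)))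
    (hbdd : ∀ u, 0 < u → ‖a u‖ ≤ C) (hGc : ContinuousOn G {s | 0 ≤ s.re})
    (hG : Set.EqOn G (laplaceTransform a) {s | 0 < s.re})
    (hψ : Continuous ψ) (hψc : HasCompactSupport ψ) (hψi : Integrable (𝓕 ψ))
    {R : ℝ} (hR : 0 < R) :
    Tendsto (fun x ↦ ∫ w, 𝓕 ψ w • (Set.Ioi 0).indicator a (x + w / R)) atTop (𝓝 0) := by
  have hdil (w : ℝ) := fourier_comp_div hR ψ w
  have hlim := tendsto_integral_fourier_sub_smul hmeas hbdd hGc hG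
    (ψ := fun v ↦ ψ (v / R)) (by fun_prop)
    (hψc.comp_homeomorph (Homeomorph.mulRight₀ R⁻¹ (inv_ne_zero hR.ne')))
    ((hψi.comp_mul_left' hR.ne').smul R |>.congr (.of_forall fun w ↦ (hdil w).symm))
  refine hlim.congr fun x ↦ ?_
  simp_rw [hdil]
  rw [← integral_indicator measurableSet_Ioi,
    ← integral_smul_comp_mul_sub hR x fun w ↦ 𝓕 ψ w • (Set.Ioi 0).indicator a (x + w / R)]
  refine integral_congr_ae (.of_forall fun u ↦ ?_)
  have hu : x + R * (u - x) / R = u := by field_simp; ring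
  simp only [Set.indicator_smul_apply, hu, smul_assoc]

theorem SlowlyOscillating.tendsto_zero_of_laplaceTransform_continuousOn [CompleteSpace E]
    (hosc : SlowlyOscillating a) (hmeas : AEStronglyMeasurable a (volume.restrict (Set.Ioi 0)))
    (hbdd : ∀ u, 0 < u → ‖a u‖ ≤ C) (hGc : ContinuousOn G {s | 0 ≤ s.re})
    (hG : Set.EqOn G (laplaceTransform a) {s | 0 < s.re}) :
    Tendsto a atTop (𝓝 0) := by
  obtain ⟨ψ, hψ, hψc, hψi, hψ0⟩ := exists_hasCompactSupport_integrable_fourier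
  set b := (Set.Ioi 0).indicator a
  have hba : a =ᶠ[atTop] b := by
    filter_upwards [eventually_gt_atTop 0] with u hu using (Set.indicator_of_mem hu a).symm
  have hbC (u : ℝ) : ‖b u‖ ≤ C := by
    by_cases hu : u ∈ Set.Ioi 0
    · simpa [b, Set.indicator_of_mem hu] using hbdd u hu
    · simpa [b, hu] using (norm_nonneg _).trans (hbdd 1 one_pos)
  have hK : ∫ w, 𝓕 ψ w = 1 :=
    (integral_fourier_eq_apply_zero hψ (hψ.integrable_of_hasCompactSupport hψc) hψi).trans hψ0
  have happrox := (hosc.congr' hba).tendsto_integral_smul_comp_add_div_sub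
    ((aestronglyMeasurable_indicator_iff measurableSet_Ioi).2 hmeas) hbC hψi
  simp_rw [hK, one_smul] at happrox
  refine Tendsto.congr' hba.symm (NormedAddGroup.tendsto_nhds_zero.2 fun ε hε ↦ ?_)
  obtain ⟨R, hclose, hR⟩ := ((NormedAddGroup.tendsto_nhds_zero.1 happrox _
    (half_pos hε)).curry.and (eventually_gt_atTop 0)).exists
  have hsmall := NormedAddGroup.tendsto_nhds_zero.1 (tendsto_integral_fourier_smul_comp_add_div
    hmeas hbdd hGc hG hψ hψc hψi hR) _ (half_pos hε)
  filter_upwards [hclose, hsmall] with x hx hx'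
  rw [norm_sub_rev] at hx
  linarith [norm_le_norm_sub_add (b x) (∫ w, 𝓕 ψ w • b (x + w / R))]

end Laplace

section BoundedSequences

open MeasureTheory Complex Topology

variable {E : Type*} [NormedAddCommGroup E] {f : ℕ → E} {C : ℝ}

lemma norm_sum_Icc_sub_sum_Icc_le (hf : ∀ n ≠ 0, ‖f n‖ ≤ C) (M N : ℕ) :
    ‖∑ n ∈ Icc 1 N, f n - ∑ n ∈ Icc 1 M, f n‖ ≤ C * |(N : ℝ) - M| := by
  wlog h : M ≤ N generalizing M N
  · rw [norm_sub_rev, abs_sub_comm]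
    exact this N M (le_of_not_ge h)
  have hsplit := sum_Ioc_consecutive f M.zero_le h
  rw [← Icc_add_one_left_eq_Ioc, ← Icc_add_one_left_eq_Ioc 0, zero_add] at hsplit
  have hbound : ∀ n ∈ Ioc M N, ‖f n‖ ≤ C :=
    fun n hn ↦ hf n (Nat.ne_zero_of_lt (mem_Ioc.1 hn).1)
  have hcast : (N : ℝ) - M = (N - M : ℕ) := (Nat.cast_sub h).symm
  rw [← hsplit, add_sub_cancel_left, hcast, Nat.abs_cast, mul_comm, ← nsmul_eq_mul, ← Nat.card_Ioc]
  exact (norm_sum_le_of_le _ hbound).trans_eq (by simp)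

lemma norm_sum_Icc_le (hf : ∀ n ≠ 0, ‖f n‖ ≤ C) (N : ℕ) :
    ‖∑ n ∈ Icc 1 N, f n‖ ≤ C * N := by
  simpa using norm_sum_Icc_sub_sum_Icc_le hf 0 N

lemma norm_sum_Icc_floor_exp_le (hf : ∀ n ≠ 0, ‖f n‖ ≤ C) (u : ℝ) :
    ‖∑ n ∈ Icc 1 ⌊Real.exp u⌋₊, f n‖ ≤ C * Real.exp u := by
  have hC : 0 ≤ C := (norm_nonneg _).trans (hf 1 one_ne_zero)
  exact (norm_sum_Icc_le hf _).trans (by gcongr; exact Nat.floor_le (Real.exp_pos u).le)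

lemma abs_natFloor_sub_natFloor_le {x y : ℝ} (hx : 0 ≤ x) (hy : 0 ≤ y) :
    |(⌊x⌋₊ : ℝ) - ⌊y⌋₊| ≤ |x - y| + 1 := by
  have := Nat.floor_le hx
  have := Nat.floor_le hy
  have := Nat.lt_floor_add_one x
  have := Nat.lt_floor_add_one y
  grind

variable [NormedSpace ℝ E]

/-- The average `e^{-u} ∑_{n ≤ e^u} f(n)` of a sequence in the logarithmic variable `u`, in which
a Dirichlet series becomes a Laplace transform. The sum starts at `n = 1`. -/
noncomputable def expAverage (f : ℕ → E) (u : ℝ) : E :=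
  Real.exp (-u) • ∑ n ∈ Icc 1 ⌊Real.exp u⌋₊, f n

lemma stronglyMeasurable_expAverage (f : ℕ → E) : StronglyMeasurable (expAverage f) := by
  have hsum : StronglyMeasurable fun N ↦ ∑ n ∈ Icc 1 N, f n := .of_discrete
  exact (by fun_prop : Continuous fun u : ℝ ↦ Real.exp (-u)).stronglyMeasurable.smul
    (hsum.comp_measurable (Nat.measurable_floor.comp Real.measurable_exp))

lemma expAverage_log_natCast (f : ℕ → E) {N : ℕ} (hN : N ≠ 0) :
    expAverage f (Real.log N) = (N : ℝ)⁻¹ • ∑ n ∈ Icc 1 N, f n := by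
  rw [expAverage, Real.exp_neg, Real.exp_log (by positivity), Nat.floor_natCast]

lemma norm_expAverage_le (hf : ∀ n ≠ 0, ‖f n‖ ≤ C) (u : ℝ) : ‖expAverage f u‖ ≤ C := by
  rw [expAverage, norm_smul, Real.norm_of_nonneg (Real.exp_pos _).le, Real.exp_neg,
    inv_mul_le_iff₀ (Real.exp_pos u), mul_comm]
  exact norm_sum_Icc_floor_exp_le hf u

lemma norm_expAverage_add_sub_le (hf : ∀ n ≠ 0, ‖f n‖ ≤ C) (x h : ℝ) :
    ‖expAverage f (x + h) - expAverage f x‖ ≤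
      C * (2 * |1 - Real.exp (-h)| + Real.exp (-(x + h))) := by
  set S : ℝ → E := fun u ↦ ∑ n ∈ Icc 1 ⌊Real.exp u⌋₊, f n
  have hC : 0 ≤ C := (norm_nonneg _).trans (hf 1 one_ne_zero)
  have hS : ‖S (x + h) - S x‖ ≤ C * (|Real.exp (x + h) - Real.exp x| + 1) :=
    (norm_sum_Icc_sub_sum_Icc_le hf _ _).trans <| by
      gcongr
      exact abs_natFloor_sub_natFloor_le (Real.exp_pos _).le (Real.exp_pos _).le
  have hfst : Real.exp (-(x + h)) * |Real.exp (x + h) - Real.exp x| = |1 - Real.exp (-h)| := by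
    rw [← abs_of_pos (Real.exp_pos (-(x + h))), ← abs_mul, mul_sub, ← Real.exp_add,
      ← Real.exp_add]
    simp
  have hsnd : |Real.exp (-(x + h)) - Real.exp (-x)| * Real.exp x = |1 - Real.exp (-h)| := by
    rw [← abs_of_pos (Real.exp_pos x), ← abs_mul, sub_mul, ← Real.exp_add, ← Real.exp_add,
      abs_sub_comm]
    simp
  calc ‖expAverage f (x + h) - expAverage f x‖
      = ‖Real.exp (-(x + h)) • (S (x + h) - S x) +
          (Real.exp (-(x + h)) - Real.exp (-x)) • S x‖ := by
        rw [smul_sub, sub_smul, sub_add_sub_cancel]; rfl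
    _ ≤ Real.exp (-(x + h)) * (C * (|Real.exp (x + h) - Real.exp x| + 1)) +
          |Real.exp (-(x + h)) - Real.exp (-x)| * (C * Real.exp x) := by
        refine norm_add_le_of_le ?_ ?_
        · rw [norm_smul, Real.norm_of_nonneg (Real.exp_pos _).le]
          gcongr
        · rw [norm_smul, Real.norm_eq_abs]
          gcongr
          exact norm_sum_Icc_floor_exp_le hf x
    _ = C * (2 * |1 - Real.exp (-h)| + Real.exp (-(x + h))) := by
        linear_combination C * hfst + C * hsnd

lemma slowlyOscillating_expAverage (hf : ∀ n ≠ 0, ‖f n‖ ≤ C) :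
    SlowlyOscillating (expAverage f) := by
  refine squeeze_zero_norm (fun p ↦ norm_expAverage_add_sub_le hf p.1 p.2) ?_
  have hstep : Tendsto (fun p : ℝ × ℝ ↦ |1 - Real.exp (-p.2)|) (atTop ×ˢ 𝓝 0) (𝓝 0) := by
    have : Continuous fun h : ℝ ↦ |1 - Real.exp (-h)| := by fun_prop
    simpa [Function.comp_def] using (this.tendsto 0).comp tendsto_snd
  have hexp : Tendsto (fun p : ℝ × ℝ ↦ Real.exp (-(p.1 + p.2))) (atTop ×ˢ 𝓝 0) (𝓝 0) :=
    Real.tendsto_exp_neg_atTop_nhds_zero.comp (tendsto_fst.atTop_add tendsto_snd)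
  simpa using ((hstep.const_mul 2).add hexp).const_mul C

end BoundedSequences

section LSeries

open MeasureTheory Complex Topology

variable {f : ℕ → ℂ} {C : ℝ}

lemma laplaceTransform_expAverage (hf : ∀ n ≠ 0, ‖f n‖ ≤ C) {s : ℂ} (hs : 0 < s.re) :
    laplaceTransform (expAverage f) s = LSeries f (s + 1) / (s + 1) := by
  have hs1 : 1 < (s + 1).re := by simpa using hs
  have hO : (fun N : ℕ ↦ ∑ n ∈ Icc 1 N, f n) =O[atTop] fun N ↦ (N : ℝ) ^ (1 : ℝ) :=
    .of_bound C (.of_forall fun N ↦ by simpa using norm_sum_Icc_le hf N)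
  rw [LSeries_eq_mul_integral f zero_le_one hs1 (LSeriesSummable_of_bounded_of_one_lt_re hf hs1) hO,
    mul_div_cancel_left₀ _ (ne_zero_of_one_lt_re hs1), ← Real.exp_zero, ← integral_comp_exp_Ioi]
  refine integral_congr_ae (.of_forall fun u ↦ ?_)
  have hpow : (Real.exp u : ℂ) ^ (-(s + 1 + 1)) = cexp (-(s + 2) * u) := by
    rw [cpow_def_of_ne_zero (by simp), ← ofReal_log (Real.exp_pos u).le, Real.log_exp]
    ring_nf
  have hexp : cexp (-s * u) * Real.exp (-u) = Real.exp u * cexp (-(s + 2) * u) := by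
    push_cast
    rw [← Complex.exp_add, ← Complex.exp_add]
    ring_nf
  simp only [expAverage, hpow, real_smul, smul_eq_mul]
  linear_combination (∑ n ∈ Icc 1 ⌊Real.exp u⌋₊, f n) * hexp

theorem tendsto_average_zero_of_LSeries_continuousOn (hf : ∀ n ≠ 0, ‖f n‖ ≤ C) {F : ℂ → ℂ}
    (hFc : ContinuousOn F {s | 1 ≤ s.re}) (hF : Set.EqOn F (LSeries f) {s | 1 < s.re}) :
    Tendsto (fun N : ℕ ↦ (∑ n ∈ Icc 1 N, f n) / N) atTop (𝓝 0) := by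
  have hGc : ContinuousOn (fun s ↦ F (s + 1) / (s + 1)) {s | 0 ≤ s.re} := by
    refine (hFc.comp (by fun_prop) fun s hs ↦ ?_).div (by fun_prop) fun s (hs : 0 ≤ s.re) ↦ ?_
    · simpa using hs
    · exact ne_zero_of_re_pos (by simpa using by linarith)
  have hG : Set.EqOn (fun s ↦ F (s + 1) / (s + 1)) (laplaceTransform (expAverage f))
      {s | 0 < s.re} := fun s (hs : 0 < s.re) ↦ by
    have hs1 : 1 < (s + 1).re := by simpa using hs
    simp only [laplaceTransform_expAverage hf hs, hF hs1]
  have hlim := (slowlyOscillating_expAverage hf).tendsto_zero_of_laplaceTransform_continuousOn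
    (stronglyMeasurable_expAverage f).aestronglyMeasurable (fun u _ ↦ norm_expAverage_le hf u)
    hGc hG
  refine (hlim.comp (Real.tendsto_log_atTop.comp tendsto_natCast_atTop_atTop)).congr' ?_
  filter_upwards [eventually_ne_atTop 0] with N hN
  simp only [Function.comp_apply, expAverage_log_natCast f hN, real_smul]
  push_cast
  rw [inv_mul_eq_div]

end LSeries

section Liouville

open ArithmeticFunction Complex Topology

lemma LSeries_eulerProduct_hasProd_of_completelyMultiplicative (f : ℕ →*₀ ℂ) {s : ℂ} (hs : s ≠ 0)
    (hsum : LSeriesSummable f s) :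
    HasProd (fun p : Nat.Primes ↦ (1 - f p * (p : ℂ) ^ (-s))⁻¹) (LSeries f s) := by
  have hterm (n : ℕ) : (f * riemannZetaSummandHom hs) n = LSeries.term f s n := by
    rw [LSeries.term_def₀ (map_zero f)]
    rfl
  have h := EulerProduct.eulerProduct_completely_multiplicative_hasProd
    (f := f * riemannZetaSummandHom hs) (by simpa only [hterm] using hsum.norm)
  rwa [tsum_congr hterm] at h

/-- The Liouville function as a completely multiplicative complex-valued function (with
`λ(0) = 0`), the form in which it has an Euler product. -/
noncomputable def liouvilleHom : ℕ →*₀ ℂ where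
  toFun n := liouville n
  map_zero' := by simp
  map_one' := by simp [liouville_apply_one]
  map_mul' m n := by simp [liouville_apply_mul]

lemma liouvilleHom_apply {n : ℕ} (hn : n ≠ 0) : liouvilleHom n = (-1) ^ cardFactors n := by
  simp [liouvilleHom, liouville_apply hn]

lemma norm_liouvilleHom_le {n : ℕ} (hn : n ≠ 0) : ‖liouvilleHom n‖ ≤ 1 := by
  simp [liouvilleHom_apply hn]

lemma LSeries_liouvilleHom_mul_riemannZeta {s : ℂ} (hs : 1 < s.re) :
    LSeries liouvilleHom s * riemannZeta s = riemannZeta (2 * s) := by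
  have hsum : LSeriesSummable liouvilleHom s :=
    LSeriesSummable_of_bounded_of_one_lt_re (fun _ ↦ norm_liouvilleHom_le) hs
  have hprod := (LSeries_eulerProduct_hasProd_of_completelyMultiplicative _
    (ne_zero_of_one_lt_re hs) hsum).mul (riemannZeta_eulerProduct_hasProd hs)
  refine hprod.unique ?_
  have hdouble := riemannZeta_eulerProduct_hasProd (s := 2 * s) (by simp; linarith)
  convert! hdouble using 2 with p
  have hsq : (p : ℂ) ^ (-(2 * s)) = ((p : ℂ) ^ (-s)) ^ 2 := by
    rw [← cpow_nat_mul]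
    ring_nf
  rw [liouvilleHom_apply p.2.ne_zero, cardFactors_apply_prime p.2, hsq, ← mul_inv]
  ring

lemma riemannZeta₁_ne_zero_of_one_le_re {s : ℂ} (hs : 1 ≤ s.re) : riemannZeta₁ s ≠ 0 := by
  rcases eq_or_ne s 1 with rfl | h
  · simp
  · have := riemannZeta_ne_zero_of_one_le_re hs
    rw [riemannZeta_eq_inv_sub_mul h] at this
    exact right_ne_zero_of_mul this

/-- The continuous extension of `∑ λ(n) n⁻ˢ = ζ(2s) / ζ(s)` to the line `re s = 1`, written through
`ζ₁(s) = (s - 1) ζ(s)` so that the point `s = 1` needs no separate treatment. -/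
noncomputable def liouvilleLFunction (s : ℂ) : ℂ :=
  riemannZeta (2 * s) * (s - 1) / riemannZeta₁ s

lemma liouvilleLFunction_eq_LSeries {s : ℂ} (hs : 1 < s.re) :
    liouvilleLFunction s = LSeries liouvilleHom s := by
  have hs1 : s ≠ 1 := by rintro rfl; simp at hs
  rw [liouvilleLFunction, div_eq_iff (riemannZeta₁_ne_zero_of_one_le_re hs.le),
    ← LSeries_liouvilleHom_mul_riemannZeta hs, riemannZeta_eq_inv_sub_mul hs1]
  field_simp [sub_ne_zero.2 hs1]

lemma continuousOn_liouvilleLFunction : ContinuousOn liouvilleLFunction {s | 1 ≤ s.re} := by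
  refine ContinuousOn.div (.mul (fun s (hs : 1 ≤ s.re) ↦ ?_) (by fun_prop))
    differentiable_riemannZeta₁.continuous.continuousOn
    fun s hs ↦ riemannZeta₁_ne_zero_of_one_le_re hs
  have hne : 2 * s ≠ 1 := fun h ↦ by
    have := congrArg Complex.re h
    simp at this
    linarith
  exact ((differentiableAt_riemannZeta hne).continuousAt.comp (f := fun s ↦ 2 * s)
    (by fun_prop)).continuousWithinAt

end Liouville

/-- The average of the Liouville function `λ(n) = (−1)^{Ω(n)}` tends to zero:
`(1/N)∑_{n=1}^{N} λ(n) → 0` (an equivalent form of the prime number theorem). -/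
theorem liouville_average_tendsto_zero :
    Tendsto (fun N : ℕ =>
        (∑ n ∈ Finset.Icc 1 N, ((-1 : ℝ) ^ (ArithmeticFunction.cardFactors n))) / (N : ℝ))
      atTop (nhds 0) := by
  have hlim := tendsto_average_zero_of_LSeries_continuousOn
    (fun _ ↦ norm_liouvilleHom_le) continuousOn_liouvilleLFunction
    fun _ ↦ liouvilleLFunction_eq_LSeries
  rw [← tendsto_ofReal_iff]
  refine hlim.congr fun N ↦ ?_
  push_cast
  congr 1
  refine sum_congr rfl fun n hn ↦ ?_
  exact liouvilleHom_apply (Nat.one_le_iff_ne_zero.1 (mem_Icc.1 hn).1)
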